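/- arXiv:2207.03140 — 4 statements merged into one kernel-verified Lean document; each statement's English description precedes it below -/
import Mathlib

section
/- Let n, m, k be natural numbers with m ≤ n and k ≥ m. Let L be an m-dimensional linear subspace of 𝔽₂ⁿ. If x₁, …, x_k are drawn independently and uniformly at random from L, then the probability that the linear span of {x₁, …, x_k} equals L is at least 1 − 2^(m−k). -/
theorem aux_ker {V : Type*} [AddCommGroup V] [Module (ZMod 2) V] [Finite V]
    (f : V →ₗ[ZMod 2] ZMod 2) (hf : f ≠ 0) :
    Nat.card V = 2 * Nat.card (LinearMap.ker f) := by
  have hs : Function.Surjective f := LinearMap.surjective hf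
  have h := Submodule.card_eq_card_quotient_mul_card (LinearMap.ker f)
  have h2 : Nat.card (V ⧸ LinearMap.ker f) = 2 := by
    rw [Nat.card_congr (f.quotKerEquivOfSurjective hs).toEquiv]; simp
  rw [h, h2]; ring

theorem aux_bad {V : Type*} [AddCommGroup V] [Module (ZMod 2) V] [Finite V] (k : ℕ) :
    Nat.card {x : Fin k → V // ¬ Submodule.span (ZMod 2) (Set.range x) = ⊤} * 2 ^ k ≤
      2 ^ Module.finrank (ZMod 2) V * Nat.card (Fin k → V) := by
  classical
  have hfin : Finite (Module.Dual (ZMod 2) V) := Module.finite_of_finite (ZMod 2)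
  have := Fintype.ofFinite (Module.Dual (ZMod 2) V)
  have ex : ∀ x : {x : Fin k → V // ¬ Submodule.span (ZMod 2) (Set.range x) = ⊤},
      ∃ f : Module.Dual (ZMod 2) V, f ≠ 0 ∧ ∀ i, x.1 i ∈ LinearMap.ker f := by
    intro x
    obtain ⟨f, hf, hle⟩ := Submodule.exists_le_ker_of_lt_top _ (lt_top_iff_ne_top.2 x.2)
    exact ⟨f, hf, fun i => hle (Submodule.subset_span ⟨i, rfl⟩)⟩
  choose f hf hk using ex
  let φ : {x : Fin k → V // ¬ Submodule.span (ZMod 2) (Set.range x) = ⊤} →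
      (Σ g : {g : Module.Dual (ZMod 2) V // g ≠ 0}, (Fin k → LinearMap.ker g.1)) :=
    fun x => ⟨⟨f x, hf x⟩, fun i => ⟨x.1 i, hk x i⟩⟩
  have hφ : Function.Injective φ := by
    intro x y h
    apply Subtype.ext
    exact congrArg (fun y : (Σ g : {g : Module.Dual (ZMod 2) V // g ≠ 0},
        (Fin k → LinearMap.ker g.1)) => fun i => ((y.2 i : V))) h
  have h1 := Nat.card_le_card_of_injective φ hφ
  have hd : Fintype.card (Module.Dual (ZMod 2) V) = 2 ^ Module.finrank (ZMod 2) V := by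
    rw [← Nat.card_eq_fintype_card, Module.natCard_eq_pow_finrank (K := ZMod 2),
      Subspace.dual_finrank_eq]; simp
  calc _ ≤ _ := Nat.mul_le_mul_right _ h1
    _ = ∑ g : {g : Module.Dual (ZMod 2) V // g ≠ 0}, Nat.card (Fin k → V) := by
        rw [Nat.card_sigma, Finset.sum_mul]
        refine Finset.sum_congr rfl fun g _ => ?_
        rw [Nat.card_fun, Nat.card_fun, aux_ker g.1 g.2]
        simp [mul_pow, mul_comm]
    _ ≤ _ := by
        rw [Finset.sum_const, smul_eq_mul, ← hd]
        exact Nat.mul_le_mul_right _ (Fintype.card_subtype_le _)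


/-- If `L` is an `m`-dimensional linear subspace of `𝔽₂ⁿ` and `x₁, …, x_k` (with `k ≥ m`)
are drawn independently and uniformly at random from `L`, then with probability at least
`1 - 2^(m-k)` the linear span of the samples equals `L`. -/
theorem stmt_0 (n m k : ℕ) (hmn : m ≤ n) (hkm : m ≤ k)
    (L : Submodule (ZMod 2) (Fin n → ZMod 2))
    (hdim : Module.finrank (ZMod 2) L = m) :
    (1 : ℝ) - (2 : ℝ) ^ ((m : ℤ) - (k : ℤ)) ≤
      (Nat.card {x : Fin k → L //
          Submodule.span (ZMod 2)
            (Set.range fun i => ((x i : L) : Fin n → ZMod 2)) = L} : ℝ) /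
        (Nat.card (Fin k → L) : ℝ) := by
  have hb := aux_bad (V := L) k
  rw [hdim] at hb
  have he : ∀ x : Fin k → L, Submodule.span (ZMod 2)
      (Set.range fun i => ((x i : L) : Fin n → ZMod 2)) = L ↔
      Submodule.span (ZMod 2) (Set.range x) = ⊤ := by
    intro x
    have h : Submodule.span (ZMod 2) (Set.range fun i => ((x i : L) : Fin n → ZMod 2)) =
        (Submodule.span (ZMod 2) (Set.range x)).map L.subtype := by
      rw [Submodule.map_span, ← Set.range_comp]; rfl
    rw [h]
    constructor
    · intro h'
      apply Submodule.map_injective_of_injective L.injective_subtype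
      rw [h', Submodule.map_subtype_top]
    · intro h'
      rw [h', Submodule.map_subtype_top]
  rw [Nat.card_congr (Equiv.subtypeEquivRight he)]
  have hs : Nat.card {x : Fin k → L // Submodule.span (ZMod 2) (Set.range x) = ⊤} +
      Nat.card {x : Fin k → L // ¬ Submodule.span (ZMod 2) (Set.range x) = ⊤} =
      Nat.card (Fin k → L) := by
    classical
    rw [← Nat.card_sum]
    exact Nat.card_congr (Equiv.sumCompl _)
  have hpos : 0 < Nat.card (Fin k → L) := Nat.card_pos
  generalize Nat.card (Fin k → L) = N at *
  generalize Nat.card {x : Fin k → L // Submodule.span (ZMod 2) (Set.range x) = ⊤} = A at *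
  generalize Nat.card {x : Fin k → L // ¬ Submodule.span (ZMod 2) (Set.range x) = ⊤} = B at *
  have hN : (0 : ℝ) < N := by exact_mod_cast hpos
  have hb' : (B : ℝ) * 2 ^ k ≤ 2 ^ m * N := by exact_mod_cast hb
  have hs' : (A : ℝ) + B = N := by exact_mod_cast hs
  rw [zpow_sub₀ (by norm_num), zpow_natCast, zpow_natCast, le_div_iff₀ hN, sub_mul, one_mul]
  have : (B : ℝ) ≤ 2 ^ m / 2 ^ k * N := by
    rw [div_mul_eq_mul_div, le_div_iff₀ (by positivity)]; exact hb'
  linarith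
end

section
/- Let n, m, k be natural numbers with m ≤ n and k ≥ m + 1. Let L be an m-dimensional linear subspace of 𝔽₂ⁿ, let t ∈ 𝔽₂ⁿ, and let A = t + L be the corresponding affine coset. If x₁, …, x_k are drawn independently and uniformly at random from A, then the probability that the linear span of {x₂ + x₁, x₃ + x₁, …, x_k + x₁} equals L is at least 1 − 2^(m−(k−1)). (Over 𝔽₂, addition and subtraction coincide, so x_i + x₁ = x_i − x₁.) -/
open Classical in
theorem fiber_card {V : Type*} [AddCommGroup V] [Module (ZMod 2) V] [Fintype V]
    (f : V →ₗ[ZMod 2] ZMod 2) (hf : f ≠ 0) (c : ZMod 2) :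
    (Finset.univ.filter (fun v => f v = c)).card * 2 ≤ Fintype.card V := by
  obtain ⟨v0, hv0⟩ : ∃ v, f v ≠ 0 := by
    by_contra! h
    exact hf (LinearMap.ext h)
  have h1 : f v0 = 1 := by
    generalize f v0 = a at hv0
    revert a
    decide
  have h2 : ((Finset.univ.filter (fun v => f v = c)) ×ˢ (Finset.univ : Finset (ZMod 2))).card
      ≤ (Finset.univ : Finset V).card := by
    apply Finset.card_le_card_of_injOn (fun p => p.1 + p.2 • v0) (fun _ _ => by simp)
    rintro ⟨v, b⟩ hv ⟨w, d⟩ hw h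
    simp at hv hw h
    have h3 := congrArg f h
    simp [hv, hw, h1] at h3
    subst h3
    simpa using h
  rw [Finset.card_product] at h2
  simpa using h2

open Classical in
theorem bad_card {V : Type*} [AddCommGroup V] [Module (ZMod 2) V] [Fintype V] (k : ℕ)
    (i₀ : Fin k) :
    (Finset.univ.filter (fun y : Fin k → V =>
      Submodule.span (ZMod 2) {v : V | ∃ i : Fin k, i ≠ i₀ ∧ v = y i + y i₀} ≠ ⊤)).card * 2 ^ k
      ≤ 2 * Fintype.card V * Fintype.card V ^ k := by
  haveI : Module.Finite (ZMod 2) V := Module.Finite.of_finite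
  haveI : Finite (V →ₗ[ZMod 2] ZMod 2) := Module.finite_of_finite (ZMod 2)
  haveI : Fintype (V →ₗ[ZMod 2] ZMod 2) := Fintype.ofFinite _
  have hdual : Fintype.card (V →ₗ[ZMod 2] ZMod 2) = Fintype.card V := by
    rw [Module.card_eq_pow_finrank (K := ZMod 2) (V := V),
      Module.card_eq_pow_finrank (K := ZMod 2) (V := V →ₗ[ZMod 2] ZMod 2)]
    congr 1
    exact Subspace.dual_finrank_eq
  let S : Finset ((V →ₗ[ZMod 2] ZMod 2) × ZMod 2) := Finset.univ.filter (fun p => p.1 ≠ 0)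
  let B : (V →ₗ[ZMod 2] ZMod 2) × ZMod 2 → Finset (Fin k → V) := fun p =>
    Fintype.piFinset (fun _ => Finset.univ.filter (fun v => p.1 v = p.2))
  have hsub : (Finset.univ.filter (fun y : Fin k → V =>
      Submodule.span (ZMod 2) {v : V | ∃ i : Fin k, i ≠ i₀ ∧ v = y i + y i₀} ≠ ⊤))
      ⊆ S.biUnion B := by
    intro y hy
    simp only [Finset.mem_filter, Finset.mem_univ, true_and] at hy
    obtain ⟨f, hf, hle⟩ := Submodule.exists_le_ker_of_lt_top _ (lt_top_iff_ne_top.2 hy)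
    simp only [Finset.mem_biUnion]
    refine ⟨(f, f (y i₀)), by simp [S, hf], ?_⟩
    simp only [B, Fintype.mem_piFinset, Finset.mem_filter, Finset.mem_univ, true_and]
    intro i
    by_cases hi : i = i₀
    · rw [hi]
    · have h := hle (Submodule.subset_span ⟨i, hi, rfl⟩)
      rw [LinearMap.mem_ker, map_add] at h
      generalize f (y i) = a at *
      generalize f (y i₀) = b at *
      revert a b
      decide
  have hB : ∀ p ∈ S, (B p).card * 2 ^ k ≤ Fintype.card V ^ k := by
    rintro p hp
    have := fiber_card p.1 (by simpa [S] using hp) p.2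
    simp only [B, Fintype.card_piFinset, Finset.prod_const, Finset.card_univ, Fintype.card_fin]
    rw [← mul_pow]
    exact Nat.pow_le_pow_left this k
  calc _ ≤ (S.biUnion B).card * 2 ^ k := Nat.mul_le_mul_right _ (Finset.card_le_card hsub)
    _ ≤ (∑ p ∈ S, (B p).card) * 2 ^ k := Nat.mul_le_mul_right _ Finset.card_biUnion_le
    _ = ∑ p ∈ S, (B p).card * 2 ^ k := Finset.sum_mul _ _ _
    _ ≤ ∑ p ∈ S, Fintype.card V ^ k := Finset.sum_le_sum hB
    _ = S.card * Fintype.card V ^ k := by simp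
    _ ≤ _ := by
      apply Nat.mul_le_mul_right
      refine (Finset.card_le_univ S).trans ?_
      rw [Fintype.card_prod, hdual, ZMod.card, mul_comm]

/-- If `A = t + L` is a coset of an `m`-dimensional linear subspace `L` of `𝔽₂ⁿ` and
`x₁, …, x_k` (with `k ≥ m + 1`) are drawn independently and uniformly at random from `A`,
then with probability at least `1 - 2^(m-(k-1))` the linear span of
`{x₂ + x₁, …, x_k + x₁}` equals `L`. -/
theorem stmt_1 (n m k : ℕ) (hmn : m ≤ n) (hkm : m + 1 ≤ k)
    (L : Submodule (ZMod 2) (Fin n → ZMod 2))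
    (hdim : Module.finrank (ZMod 2) L = m)
    (t : Fin n → ZMod 2)
    (A : Set (Fin n → ZMod 2)) (hA : A = (fun v => t + v) '' (L : Set (Fin n → ZMod 2)))
    (i₀ : Fin k) (hi₀ : (i₀ : ℕ) = 0) :
    (1 : ℝ) - (2 : ℝ) ^ ((m : ℤ) - ((k : ℤ) - 1)) ≤
      (Nat.card {x : Fin k → A //
          Submodule.span (ZMod 2)
            {v : Fin n → ZMod 2 | ∃ i : Fin k, i ≠ i₀ ∧
              v = ((x i : A) : Fin n → ZMod 2) + ((x i₀ : A) : Fin n → ZMod 2)} = L} : ℝ) /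
        (Nat.card (Fin k → A) : ℝ) := by
  classical
  subst hA
  haveI : Fintype L := Fintype.ofFinite _
  let e : L ≃ ((fun v => t + v) '' (L : Set (Fin n → ZMod 2))) :=
    Equiv.Set.image (fun v => t + v) (L : Set (Fin n → ZMod 2)) (add_right_injective t)
  have he : ∀ v : L, ((e v : _) : Fin n → ZMod 2) = t + v := fun v => rfl
  let E := Equiv.arrowCongr (Equiv.refl (Fin k)) e
  have hgood : Nat.card {x : Fin k → ((fun v => t + v) '' (L : Set (Fin n → ZMod 2))) //
          Submodule.span (ZMod 2)
            {v : Fin n → ZMod 2 | ∃ i : Fin k, i ≠ i₀ ∧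
              v = (x i : Fin n → ZMod 2) + (x i₀ : Fin n → ZMod 2)} = L} =
      Nat.card {y : Fin k → L // Submodule.span (ZMod 2)
        {v : L | ∃ i : Fin k, i ≠ i₀ ∧ v = y i + y i₀} = ⊤} := by
    symm
    apply Nat.card_congr
    refine E.subtypeEquiv ?_
    intro y
    have hset : {v : Fin n → ZMod 2 | ∃ i : Fin k, i ≠ i₀ ∧
              v = (E y i : Fin n → ZMod 2) + (E y i₀ : Fin n → ZMod 2)} =
        L.subtype '' {v : L | ∃ i : Fin k, i ≠ i₀ ∧ v = y i + y i₀} := by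
      have key : ∀ i, (E y i : Fin n → ZMod 2) + (E y i₀ : Fin n → ZMod 2)
          = ((y i + y i₀ : L) : Fin n → ZMod 2) := by
        intro i
        change (t + (y i : Fin n → ZMod 2)) + (t + (y i₀ : Fin n → ZMod 2)) = _
        rw [add_add_add_comm, show t + t = 0 from funext fun j => CharTwo.add_self_eq_zero (t j), zero_add]
        rfl
      ext v
      simp only [key, Set.mem_setOf_eq, Set.mem_image]
      constructor
      · rintro ⟨i, hi, rfl⟩
        exact ⟨_, ⟨i, hi, rfl⟩, rfl⟩
      · rintro ⟨_, ⟨i, hi, rfl⟩, rfl⟩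
        exact ⟨i, hi, rfl⟩
    rw [hset, Submodule.span_image]
    constructor
    · intro h
      rw [h, Submodule.map_subtype_top]
    · intro h
      apply Submodule.map_injective_of_injective L.injective_subtype
      rw [h, Submodule.map_subtype_top]
  have hLcard : Fintype.card L = 2 ^ m := by
    rw [Module.card_eq_pow_finrank (K := ZMod 2) (V := L), hdim, ZMod.card]
  have htot : Nat.card (Fin k → ((fun v => t + v) '' (L : Set (Fin n → ZMod 2)))) =
      (2 ^ m) ^ k := by
    rw [Nat.card_congr E.symm, Nat.card_eq_fintype_card]
    simp [hLcard]
  rw [hgood, htot, Nat.card_eq_fintype_card, Fintype.card_subtype]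
  have hb := bad_card (V := L) k i₀
  have hsum := Finset.card_filter_add_card_filter_not (s := (Finset.univ : Finset (Fin k → L)))
    (fun y : Fin k → L => Submodule.span (ZMod 2)
        {v : L | ∃ i : Fin k, i ≠ i₀ ∧ v = y i + y i₀} = ⊤)
  rw [Finset.card_univ, Fintype.card_fun, Fintype.card_fin, hLcard] at hsum
  rw [hLcard] at hb
  simp only [ne_eq] at hb
  generalize (Finset.univ.filter (fun y : Fin k → L => ¬ Submodule.span (ZMod 2)
        {v : L | ∃ i : Fin k, i ≠ i₀ ∧ v = y i + y i₀} = ⊤)).card = b at hb hsum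
  generalize (Finset.univ.filter (fun y : Fin k → L => Submodule.span (ZMod 2)
        {v : L | ∃ i : Fin k, i ≠ i₀ ∧ v = y i + y i₀} = ⊤)).card = g at hsum ⊢
  have hz : (2 : ℝ) ^ ((m : ℤ) - ((k : ℤ) - 1)) = 2 * 2 ^ m / 2 ^ k := by
    rw [show (m : ℤ) - ((k : ℤ) - 1) = (1 + m : ℤ) - k by ring, zpow_sub₀ two_ne_zero,
      zpow_add₀ two_ne_zero]
    simp
  have hb' : (b : ℝ) * 2 ^ k ≤ 2 * 2 ^ m * (2 ^ m) ^ k := by exact_mod_cast hb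
  have hs' : (g : ℝ) + b = (2 ^ m) ^ k := by exact_mod_cast hsum
  have hT : (0 : ℝ) < (2 ^ m) ^ k := by positivity
  have hK : (0 : ℝ) < 2 ^ k := by positivity
  push_cast
  rw [hz, le_div_iff₀ hT, sub_mul, one_mul, div_mul_eq_mul_div]
  have := (le_div_iff₀ hK).2 hb'
  linarith
end

section
/- Let X be a finite set and let ψ, φ : X → ℂ satisfy ∑_{x∈X} |ψ(x)|² = 1 and ∑_{x∈X} |φ(x)|² = 1. Then (1/2)·∑_{x∈X} | |ψ(x)|² − |φ(x)|² | ≤ √(1 − |⟨ψ, φ⟩|²), where ⟨ψ, φ⟩ = ∑_{x∈X} conj(ψ(x))·φ(x). -/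
/-- The total variation distance between the Born distributions of two unit vectors
`ψ, φ : X → ℂ` is at most `√(1 − |⟨ψ, φ⟩|²)`. -/
theorem stmt_4 (X : Type*) [Fintype X] (ψ φ : X → ℂ)
    (hψ : ∑ x, ‖ψ x‖ ^ 2 = 1) (hφ : ∑ x, ‖φ x‖ ^ 2 = 1) :
    (1 / 2) * ∑ x, |‖ψ x‖ ^ 2 - ‖φ x‖ ^ 2| ≤
      Real.sqrt (1 - ‖∑ x, (starRingEnd ℂ) (ψ x) * φ x‖ ^ 2) := by
  apply Real.le_sqrt_of_sq_le
  have hF : ‖∑ x, (starRingEnd ℂ) (ψ x) * φ x‖ ≤ ∑ x, ‖ψ x‖ * ‖φ x‖ := by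
    refine (norm_sum_le _ _).trans (le_of_eq ?_)
    simp
  have hF2 := pow_le_pow_left₀ (norm_nonneg _) hF 2
  have h1 : ∑ x, |‖ψ x‖ - ‖φ x‖| ^ 2 = 2 - 2 * ∑ x, ‖ψ x‖ * ‖φ x‖ := by
    have : ∀ x, |‖ψ x‖ - ‖φ x‖| ^ 2 = ‖ψ x‖ ^ 2 + ‖φ x‖ ^ 2 - 2 * (‖ψ x‖ * ‖φ x‖) := by
      intro x
      rw [sq_abs]
      ring
    simp only [this, Finset.sum_sub_distrib, Finset.sum_add_distrib, ← Finset.mul_sum, hψ, hφ]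
    ring
  have h2 : ∑ x, (‖ψ x‖ + ‖φ x‖) ^ 2 = 2 + 2 * ∑ x, ‖ψ x‖ * ‖φ x‖ := by
    have : ∀ x, (‖ψ x‖ + ‖φ x‖) ^ 2 = ‖ψ x‖ ^ 2 + ‖φ x‖ ^ 2 + 2 * (‖ψ x‖ * ‖φ x‖) := by
      intro x
      ring
    simp only [this, Finset.sum_add_distrib, ← Finset.mul_sum, hψ, hφ]
    ring
  have h3 : ∑ x, |‖ψ x‖ ^ 2 - ‖φ x‖ ^ 2| = ∑ x, |‖ψ x‖ - ‖φ x‖| * (‖ψ x‖ + ‖φ x‖) := by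
    refine Finset.sum_congr rfl fun x _ => ?_
    rw [sq_sub_sq, abs_mul, abs_of_nonneg (by positivity : 0 ≤ ‖ψ x‖ + ‖φ x‖), mul_comm]
  have h4 := Finset.sum_mul_sq_le_sq_mul_sq Finset.univ
    (fun x => |‖ψ x‖ - ‖φ x‖|) (fun x => ‖ψ x‖ + ‖φ x‖)
  rw [h1, h2, ← h3] at h4
  nlinarith
end

section
/- Let n ≥ 1, let ε ∈ (0, 1/2), let Q be a probability distribution on 𝔽₂ⁿ × 𝔽₂, and let s, t ∈ 𝔽₂ⁿ. If TV(Q, P_s) ≤ ε and TV(Q, P_t) < 1/2 − ε, then t = s. -/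
theorem aux_shift {G : Type*} [AddGroup G] [Fintype G] (g : G → ℝ) (v : G) :
    ∑ x, g (x + v) = ∑ x, g x :=
  Equiv.sum_comp (Equiv.addRight v) g

/-- If a distribution `Q` on `𝔽₂ⁿ × 𝔽₂` is `ε`-close in total variation distance to the
parity distribution `P_s` and less than `1/2 − ε`-far from `P_t`, then `t = s`. -/
theorem stmt_11 (n : ℕ) (hn : 1 ≤ n) (ε : ℝ) (hε0 : 0 < ε) (hε : ε < 1 / 2)
    (P : (Fin n → ZMod 2) → ((Fin n → ZMod 2) × ZMod 2) → ℝ)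
    (hP : ∀ u : Fin n → ZMod 2, ∀ p : (Fin n → ZMod 2) × ZMod 2,
      P u p = if p.2 = ∑ i, u i * p.1 i then (2 : ℝ) ^ (-(n : ℤ)) else 0)
    (Q : ((Fin n → ZMod 2) × ZMod 2) → ℝ)
    (hQ0 : ∀ p, 0 ≤ Q p) (hQ1 : ∑ p, Q p = 1)
    (s t : Fin n → ZMod 2)
    (hs : (1 / 2) * ∑ p, |Q p - P s p| ≤ ε)
    (ht : (1 / 2) * ∑ p, |Q p - P t p| < 1 / 2 - ε) :
    t = s := by
  by_contra hne
  obtain ⟨i, hi⟩ : ∃ i, t i ≠ s i := by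
    by_contra h
    push Not at h
    exact hne (funext h)
  have htri : ∑ p, |P s p - P t p| ≤ ∑ p, |Q p - P s p| + ∑ p, |Q p - P t p| := by
    rw [← Finset.sum_add_distrib]
    refine Finset.sum_le_sum fun p _ => ?_
    rw [abs_sub_comm (Q p) (P s p)]
    exact abs_sub_le _ _ _
  have hc : (0 : ℝ) < (2 : ℝ) ^ (-(n : ℤ)) := by positivity
  have hcn : (2 : ℝ) ^ n * (2 : ℝ) ^ (-(n : ℤ)) = 1 := by
    rw [zpow_neg, zpow_natCast]
    exact mul_inv_cancel₀ (by positivity)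
  have key : ∀ a b a' b' : ZMod 2, ∀ c : ℝ, 0 < c → b' ≠ a' →
      2 * c ≤ (∑ y : ZMod 2, |(if y = a then c else 0) - (if y = b then c else 0)|) +
        ∑ y : ZMod 2, |(if y = a + a' then c else 0) - (if y = b + b' then c else 0)| := by
    intro a b a' b' c hc h
    have h2 : ∀ a b : ZMod 2, a ≠ b →
        ∑ y : ZMod 2, |(if y = a then c else 0) - (if y = b then c else 0)| = 2 * c := by
      intro a b hab
      have hu : (Finset.univ : Finset (ZMod 2)) = {a, b} := by
        revert a b; decide
      rw [hu, Finset.sum_pair hab]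
      simp [hab, hab.symm, abs_of_pos hc]
      ring
    by_cases hab : a = b
    · subst hab
      rw [h2 (a + a') (a + b') (fun h' => h (add_left_cancel h').symm)]
      simp
    · rw [h2 a b hab]
      have : 0 ≤ ∑ y : ZMod 2,
        |(if y = a + a' then c else 0) - (if y = b + b' then c else 0)| :=
        Finset.sum_nonneg fun _ _ => abs_nonneg _
      linarith
  have hsum : 1 ≤ ∑ p, |P s p - P t p| := by
    rw [Fintype.sum_prod_type]
    obtain ⟨g, hg⟩ : ∃ g : (Fin n → ZMod 2) → ℝ,
        ∀ x, g x = ∑ y, |P s (x, y) - P t (x, y)| := ⟨_, fun _ => rfl⟩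
    simp only [← hg]
    have hshift : ∑ x, g (x + Pi.single i 1) = ∑ x, g x :=
      aux_shift g (Pi.single i (1 : ZMod 2))
    have hpt : ∀ x, 2 * (2 : ℝ) ^ (-(n : ℤ)) ≤ g x + g (x + Pi.single i 1) := by
      intro x
      have hd : ∀ u : Fin n → ZMod 2,
          ∑ j, u j * (x + Pi.single i 1 : Fin n → ZMod 2) j = ∑ j, u j * x j + u i := by
        intro u
        simp [mul_add, Finset.sum_add_distrib, Pi.single_apply]
      have := key (∑ j, s j * x j) (∑ j, t j * x j) (s i) (t i) _ hc hi
      simp only [hg, hP, hd]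
      exact this
    have h3 : ∑ _x : Fin n → ZMod 2, 2 * (2 : ℝ) ^ (-(n : ℤ)) ≤
        ∑ x, (g x + g (x + Pi.single i 1)) := Finset.sum_le_sum fun x _ => hpt x
    rw [Finset.sum_add_distrib, hshift, Finset.sum_const, Finset.card_univ, nsmul_eq_mul] at h3
    simp only [Fintype.card_fun, ZMod.card, Fintype.card_fin, Nat.cast_pow, Nat.cast_ofNat] at h3
    linarith
  linarith
end
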